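/- arXiv:1112.3695 — 2 statements merged into one kernel-verified Lean document; each statement's English description precedes it below -/
import Mathlib

section
/- Let n ≥ 2 and let f = K·∏_{j=1}^{l}(a_j·x + b_j·y)^{d_j} ∈ ℂ[x,y], where K ∈ ℂ is nonzero, the vectors (a_j,b_j) ∈ ℂ² are nonzero and pairwise non-proportional, each d_j ≥ 1, and Σ_j d_j = n. Set g := conj(a₁)·∂f/∂x + conj(b₁)·∂f/∂y. Then for every i ∈ {1,…,l}, (a_i·x + b_i·y)^{d_i + 1} does not divide g. -/
open MvPolynomial Finset

/-!
Write `f = ℓ ^ d * h` with `ℓ` one of the linear factors and `h` the product of the others, and let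
`D` be the derivative along `v`, so that `D f = d * ℓ ^ (d - 1) * ℓ v * h + ℓ ^ d * D h`.
If `ℓ v ≠ 0`, evaluation of `D f / ℓ ^ (d - 1)` at a nonzero point of the line `ℓ = 0`, where `h`
does not vanish, shows that `ℓ` divides `D f` exactly `d - 1` times. If `ℓ v = 0`, then
`D f = ℓ ^ d * D h`, and Euler's identity gives `(D h) v = deg h * h v`. This is nonzero: `v` is a
nonzero point of the line `ℓ = 0`, and `deg h > 0` because some factor of `f` does not vanish at
`v`. Hence `ℓ` divides `D f` exactly `d` times.
-/

open Matrix

section Derivation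

variable {R A : Type*} [CommSemiring R] [CommRing A] [IsDomain A] [Algebra R A]

theorem dvd_natCast_mul_of_pow_succ_dvd_derivation (D : Derivation R A A) {ℓ h : A} {d : ℕ}
    (hℓ : ℓ ≠ 0) (hdvd : ℓ ^ (d + 1) ∣ D (ℓ ^ d * h)) : ℓ ∣ d * (D ℓ * h) := by
  cases d with
  | zero => simp
  | succ e =>
    have leibniz : D (ℓ ^ (e + 1) * h) = ℓ ^ e * (ℓ * D h + (e + 1 : ℕ) * (D ℓ * h)) := by
      simp only [Derivation.leibniz, Derivation.leibniz_pow, smul_eq_mul, nsmul_eq_mul,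
        Nat.add_sub_cancel]
      ring
    rw [leibniz, add_assoc, pow_add, mul_dvd_mul_iff_left (pow_ne_zero e hℓ)] at hdvd
    exact (dvd_add_right (dvd_mul_right ℓ _)).1 ((dvd_pow_self ℓ two_ne_zero).trans hdvd)

theorem pow_succ_dvd_derivation_iff {D : Derivation R A A} {ℓ : A} (hℓ : ℓ ≠ 0) (hD : D ℓ = 0)
    (d : ℕ) (h : A) : ℓ ^ (d + 1) ∣ D (ℓ ^ d * h) ↔ ℓ ∣ D h := by
  have leibniz : D (ℓ ^ d * h) = ℓ ^ d * D h := by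
    rw [D.leibniz, D.leibniz_pow, hD, smul_zero, smul_zero, smul_zero, add_zero, smul_eq_mul]
  rw [leibniz, pow_succ, mul_dvd_mul_iff_left (pow_ne_zero d hℓ)]

end Derivation

theorem dotProduct_ne_zero_of_det_ne_zero {R : Type*} [CommRing R] [IsDomain R] {u w p : Fin 2 → R}
    (hdet : (of ![u, w]).det ≠ 0) (hp : p ≠ 0) (hwp : w ⬝ᵥ p = 0) : u ⬝ᵥ p ≠ 0 := by
  refine fun hup => hp (eq_zero_of_mulVec_eq_zero hdet ?_)
  ext k
  fin_cases k
  · exact hup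
  · exact hwp

noncomputable section

variable {σ R : Type*} [Fintype σ]

section CommSemiring

variable [CommSemiring R]

/-- The linear form `∑ i, w i * x i` as a polynomial; for `w = (a, b)` it is the factor
`a * x + b * y` contributed by the Majorana point of coordinates `(a, b)`. -/
def linearForm (w : σ → R) : MvPolynomial σ R :=
  ∑ i, C (w i) * X i

/-- The directional derivative `∑ i, v i * ∂/∂x i` along `v`, bundled as a derivation; for
`v = (conj a, conj b)` it encodes, up to a scalar, the projection `⟨η|ψ⟩` where `η = (a, b)`. -/
def dirDeriv (v : σ → R) : Derivation R (MvPolynomial σ R) (MvPolynomial σ R) :=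
  ∑ i, (C (v i) : MvPolynomial σ R) • pderiv i

/-- The polynomial `K * ∏ j ∈ s, ℓ j ^ d j` of a symmetric state whose Majorana points have
coordinates `w j` and degeneracies `d j`, where `ℓ j` is the linear form with coefficients `w j`. -/
def majoranaPoly {ι : Type*} (s : Finset ι) (K : R) (w : ι → σ → R) (d : ι → ℕ) :
    MvPolynomial σ R :=
  C K * ∏ j ∈ s, linearForm (w j) ^ d j

theorem eval_linearForm (p w : σ → R) : eval p (linearForm w) = w ⬝ᵥ p := by
  simp [linearForm, dotProduct]

theorem isHomogeneous_linearForm (w : σ → R) : (linearForm w).IsHomogeneous 1 :=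
  IsHomogeneous.sum _ _ _ fun i _ => isHomogeneous_C_mul_X (w i) i

theorem linearForm_ne_zero {w : σ → R} (hw : w ≠ 0) : linearForm w ≠ 0 := by
  classical
  obtain ⟨i, hi⟩ := Function.ne_iff.1 hw
  intro h
  have eval_zero := eval_linearForm (Pi.single i 1) w
  rw [h, map_zero, dotProduct_single_one] at eval_zero
  exact hi eval_zero.symm

theorem dirDeriv_apply (v : σ → R) (f : MvPolynomial σ R) :
    dirDeriv v f = ∑ i, C (v i) * pderiv i f := by
  rw [dirDeriv, ← Derivation.coeFnAddMonoidHom_apply, map_sum, Finset.sum_apply]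
  rfl

theorem dirDeriv_linearForm (v w : σ → R) : dirDeriv v (linearForm w) = C (w ⬝ᵥ v) := by
  classical
  simp [dirDeriv_apply, linearForm, dotProduct, pderiv_X, Pi.single_apply, mul_comm]

theorem eval_dirDeriv_self {v : σ → R} {f : MvPolynomial σ R} {m : ℕ}
    (hf : f.IsHomogeneous m) : eval v (dirDeriv v f) = m * eval v f := by
  simpa [dirDeriv_apply] using congrArg (eval v) hf.sum_X_mul_pderiv

variable {ι : Type*}

theorem isHomogeneous_majoranaPoly (s : Finset ι) (K : R) (w : ι → σ → R) (d : ι → ℕ) :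
    (majoranaPoly s K w d).IsHomogeneous (∑ j ∈ s, d j) := by
  refine (IsHomogeneous.prod s _ d fun j _ => ?_).C_mul K
  simpa only [one_mul] using (isHomogeneous_linearForm (w j)).pow (d j)

variable {s : Finset ι}

theorem eval_majoranaPoly_ne_zero [NoZeroDivisors R] [Nontrivial R] {K : R} {w : ι → σ → R}
    {p : σ → R} (hK : K ≠ 0) (hp : ∀ j ∈ s, w j ⬝ᵥ p ≠ 0) (d : ι → ℕ) :
    eval p (majoranaPoly s K w d) ≠ 0 := by
  simp only [majoranaPoly, map_mul, map_prod, map_pow, eval_C, eval_linearForm]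
  exact mul_ne_zero hK (prod_ne_zero_iff.2 fun j hj => pow_ne_zero _ (hp j hj))

theorem majoranaPoly_eq_mul_erase [DecidableEq ι] {i : ι} (hi : i ∈ s) (K : R) (w : ι → σ → R)
    (d : ι → ℕ) :
    majoranaPoly s K w d = linearForm (w i) ^ d i * majoranaPoly (s.erase i) K w d := by
  rw [majoranaPoly, majoranaPoly, ← mul_prod_erase s _ hi, mul_left_comm]

end CommSemiring

section IsDomain

variable [CommRing R] [IsDomain R] {v w : σ → R} {h : MvPolynomial σ R} {d : ℕ}

theorem not_linearForm_pow_succ_dvd_dirDeriv_of_dotProduct_ne_zero {p : σ → R}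
    (hd : (d : R) ≠ 0) (hwv : w ⬝ᵥ v ≠ 0) (hwp : w ⬝ᵥ p = 0) (hh : eval p h ≠ 0) :
    ¬ linearForm w ^ (d + 1) ∣ dirDeriv v (linearForm w ^ d * h) := by
  have hw : w ≠ 0 := fun hw => hwv (by rw [hw, zero_dotProduct])
  intro hdvd
  have eval_dvd := map_dvd (eval p)
    (dvd_natCast_mul_of_pow_succ_dvd_derivation (dirDeriv v) (linearForm_ne_zero hw) hdvd)
  rw [eval_linearForm, hwp, zero_dvd_iff, dirDeriv_linearForm, map_mul, map_mul, map_natCast,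
    eval_C] at eval_dvd
  exact mul_ne_zero hd (mul_ne_zero hwv hh) eval_dvd

theorem not_linearForm_pow_succ_dvd_dirDeriv_of_dotProduct_eq_zero {m : ℕ} (hw : w ≠ 0)
    (hwv : w ⬝ᵥ v = 0) (hh : h.IsHomogeneous m) (hm : (m : R) ≠ 0) (hv : eval v h ≠ 0) :
    ¬ linearForm w ^ (d + 1) ∣ dirDeriv v (linearForm w ^ d * h) := by
  have hD : dirDeriv v (linearForm w) = 0 := by rw [dirDeriv_linearForm, hwv, C_0]
  rw [pow_succ_dvd_derivation_iff (linearForm_ne_zero hw) hD]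
  intro hdvd
  have eval_dvd := map_dvd (eval v) hdvd
  rw [eval_linearForm, hwv, zero_dvd_iff, eval_dirDeriv_self hh] at eval_dvd
  exact mul_ne_zero hm hv eval_dvd

end IsDomain

theorem degeneracy_cannot_increase_general {ι : Type*} [CommRing R] [IsDomain R] [CharZero R]
    {s : Finset ι} {K : R} (hK : K ≠ 0) {w : ι → Fin 2 → R} {d : ι → ℕ} {v : Fin 2 → R} {i j : ι}
    (hi : i ∈ s) (hdi : d i ≠ 0) (hdet : ∀ k ∈ s, k ≠ i → (of ![w k, w i]).det ≠ 0)
    (hj : j ∈ s) (hdj : d j ≠ 0) (hwv : w j ⬝ᵥ v ≠ 0) :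
    ¬ linearForm (w i) ^ (d i + 1) ∣ dirDeriv v (majoranaPoly s K w d) := by
  classical
  have eval_cofactor_ne_zero {p : Fin 2 → R} (hp : p ≠ 0) (hwp : w i ⬝ᵥ p = 0) :
      eval p (majoranaPoly (s.erase i) K w d) ≠ 0 :=
    eval_majoranaPoly_ne_zero hK (fun k hk => dotProduct_ne_zero_of_det_ne_zero
      (hdet k (mem_of_mem_erase hk) (ne_of_mem_erase hk)) hp hwp) d
  rw [majoranaPoly_eq_mul_erase hi]
  by_cases hiv : w i ⬝ᵥ v = 0
  · have hji : j ≠ i := fun hji => hwv (hji ▸ hiv)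
    have hwi : w i ≠ 0 := fun hwi => hdet j hj hji (by simp [det_fin_two, hwi])
    have hv : v ≠ 0 := fun hv => hwv (by rw [hv, dotProduct_zero])
    have degree_ne_zero : ∑ k ∈ s.erase i, d k ≠ 0 := fun hsum =>
      hdj (sum_eq_zero_iff.1 hsum j (mem_erase.2 ⟨hji, hj⟩))
    exact not_linearForm_pow_succ_dvd_dirDeriv_of_dotProduct_eq_zero hwi hiv
      (isHomogeneous_majoranaPoly (s.erase i) K w d) (Nat.cast_ne_zero.2 degree_ne_zero)
      (eval_cofactor_ne_zero hv hiv)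
  · obtain ⟨p, hp, hpw⟩ := exists_ne_zero_dotProduct_eq_zero (w i)
    have hwp : w i ⬝ᵥ p = 0 := by rwa [dotProduct_comm]
    exact not_linearForm_pow_succ_dvd_dirDeriv_of_dotProduct_ne_zero (Nat.cast_ne_zero.2 hdi) hiv
      hwp (eval_cofactor_ne_zero hp hwp)

end

/-- for `f = K·∏_j (a_j·x + b_j·y)^{d_j}` of degree `n ≥ 2` and
`g = conj(a₁)·∂f/∂x + conj(b₁)·∂f/∂y`, the power `(a_i·x + b_i·y)^{d_i + 1}`
never divides `g` (i.e. `m_i ≤ d_i`). -/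
theorem degeneracy_cannot_increase (n l : ℕ) (hn : 2 ≤ n) (hl : 1 ≤ l)
    (K : ℂ) (hK : K ≠ 0) (a b : Fin l → ℂ) (d : Fin l → ℕ)
    (hab : ∀ j, ¬(a j = 0 ∧ b j = 0))
    (hdist : ∀ j j', j ≠ j' → a j * b j' - a j' * b j ≠ 0)
    (hd : ∀ j, 1 ≤ d j) (hsum : ∑ j, d j = n)
    (f g : MvPolynomial (Fin 2) ℂ)
    (hf : f = C K * ∏ j, (C (a j) * X (0 : Fin 2) + C (b j) * X (1 : Fin 2)) ^ (d j))
    (hg : g = C ((starRingEnd ℂ) (a ⟨0, hl⟩)) * pderiv (0 : Fin 2) f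
            + C ((starRingEnd ℂ) (b ⟨0, hl⟩)) * pderiv (1 : Fin 2) f) :
    ∀ i : Fin l,
      ¬ ((C (a i) * X (0 : Fin 2) + C (b i) * X (1 : Fin 2)) ^ (d i + 1) ∣ g) := by
  intro i
  have self_ne_zero : ![a ⟨0, hl⟩, b ⟨0, hl⟩] ⬝ᵥ star ![a ⟨0, hl⟩, b ⟨0, hl⟩] ≠ 0 := by
    open scoped ComplexOrder in
    rw [Ne, dotProduct_self_star_eq_zero]
    simpa using hab ⟨0, hl⟩
  have not_dvd := degeneracy_cannot_increase_general (w := fun j => ![a j, b j]) hK (mem_univ i)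
    (Nat.one_le_iff_ne_zero.1 (hd i))
    (fun k _ hk => by simpa [det_fin_two, mul_comm] using hdist k i hk)
    (mem_univ _) (Nat.one_le_iff_ne_zero.1 (hd ⟨0, hl⟩)) self_ne_zero
  simpa [linearForm, majoranaPoly, dirDeriv_apply, hf, hg, mul_add, mul_left_comm] using not_dvd
end

section
/- Let n ≥ 2 and let f = K·∏_{j=1}^{l}(a_j·x + b_j·y)^{d_j} ∈ ℂ[x,y], where K ∈ ℂ is nonzero, the vectors (a_j,b_j) ∈ ℂ² are nonzero and pairwise non-proportional, each d_j ≥ 1, and Σ_j d_j = n. Set g := conj(a₁)·∂f/∂x + conj(b₁)·∂f/∂y, and for each i let m_i denote the largest power of (a_i·x + b_i·y) dividing g. Then for every i ∈ {1,…,l}, exactly one of the following holds: (1) m_i = d_i and conj(a₁)·a_i + conj(b₁)·b_i = 0; (2) m_i = d_i − 1 and conj(a₁)·a_i + conj(b₁)·b_i ≠ 0. -/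
open MvPolynomial Finset

/-!
Let `D` be the derivative in the direction `v = (conj a₁, conj b₁)`, and write `f = L ^ d * h` with
`L = a_i x + b_i y` and `h` prime to `L`. Then `D f = L ^ (d - 1) * (d * h * D L + L * D h)`, where
`D L` is the constant `L(v) = ⟨η₁|η_i⟩`.

If `L(v) ≠ 0`, the second factor is not divisible by `L`, since it does not vanish at the zero
`(b_i, -a_i)` of `L`. If `L(v) = 0`, then `D f = L ^ d * D h`, and Euler's identity
`(D h)(v) = deg h * h(v)` gives `L ∤ D h`: `L` vanishes at `v`, while the factors of `h`, not being
proportional to `L`, do not. Here `deg h ≠ 0` because `a₁ x + b₁ y`, which does not vanish at `v`,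
divides `h`.
-/

section Multiplicity

lemma emultiplicity_pow_mul_of_not_dvd {M : Type*} [CommMonoidWithZero M] [IsCancelMulZero M]
    {x u : M} (hx : x ≠ 0) (hu : ¬ x ∣ u) (k : ℕ) : emultiplicity x (x ^ k * u) = k := by
  refine emultiplicity_eq_coe.2 ⟨dvd_mul_right _ _, ?_⟩
  rwa [pow_succ, mul_dvd_mul_iff_left (pow_ne_zero k hx)]

variable {R A : Type*} [CommSemiring R] [CommRing A] [IsDomain A] [Algebra R A]
  (D : Derivation R A A) {x h : A}

lemma emultiplicity_derivation_pow_mul_of_eq_zero (hx : x ≠ 0) (hDx : D x = 0)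
    (hDh : ¬ x ∣ D h) (k : ℕ) : emultiplicity x (D (x ^ k * h)) = k := by
  have hD : D (x ^ k * h) = x ^ k * D h := by simp [D.leibniz_pow, hDx]
  rw [hD, emultiplicity_pow_mul_of_not_dvd hx hDh]

lemma emultiplicity_derivation_pow_succ_mul (hx : x ≠ 0) (k : ℕ)
    (hxh : ¬ x ∣ (k + 1) * h * D x) : emultiplicity x (D (x ^ (k + 1) * h)) = k := by
  have hD : D (x ^ (k + 1) * h) = x ^ k * ((k + 1) * h * D x + x * D h) := by
    simp only [D.leibniz, D.leibniz_pow, smul_eq_mul, nsmul_eq_mul, Nat.cast_add, Nat.cast_one,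
      Nat.add_sub_cancel]
    ring
  rw [hD, emultiplicity_pow_mul_of_not_dvd hx]
  rwa [dvd_add_left (dvd_mul_right x _)]

end Multiplicity

section DirectionalDerivative

variable {σ R : Type*} [CommSemiring R]

/-- The derivative of multivariate polynomials in the direction of a constant vector `v`, as the
derivation sending each variable `X i` to `C (v i)`. -/
noncomputable def directionalDeriv (v : σ → R) :
    Derivation R (MvPolynomial σ R) (MvPolynomial σ R) :=
  mkDerivation R fun i => C (v i)

lemma directionalDeriv_eq_sum_pderiv [Fintype σ] (v : σ → R) (F : MvPolynomial σ R) :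
    directionalDeriv v F = ∑ i, C (v i) * pderiv i F := by
  classical
  have hsum (G : MvPolynomial σ R) :
      (∑ i, (C (v i) : MvPolynomial σ R) • pderiv i) G = ∑ i, C (v i) * pderiv i G := by
    rw [← Derivation.coeFnAddMonoidHom_apply, map_sum, Finset.sum_apply]
    rfl
  have hderiv : directionalDeriv v = ∑ i, (C (v i) : MvPolynomial σ R) • pderiv i :=
    derivation_ext fun j => by
      simp [hsum, directionalDeriv, mkDerivation_X, pderiv_X, Pi.single_apply]
  rw [hderiv, hsum]

lemma eval_directionalDeriv_of_isHomogeneous [Finite σ] {F : MvPolynomial σ R} {n : ℕ}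
    (hF : F.IsHomogeneous n) (v : σ → R) : eval v (directionalDeriv v F) = n * eval v F := by
  cases nonempty_fintype σ
  simpa [directionalDeriv_eq_sum_pderiv] using congrArg (eval v) hF.sum_X_mul_pderiv

lemma not_dvd_of_eval_ne_zero {L F : MvPolynomial σ R} {v : σ → R} (hL : eval v L = 0)
    (hF : eval v F ≠ 0) : ¬ L ∣ F :=
  fun hdvd => hF (zero_dvd_iff.1 (hL ▸ map_dvd (eval v) hdvd))

end DirectionalDerivative

section LinearForm

variable {R : Type*}

/-- The binary linear form `a x + b y`. It represents the point of the Majorana constellation with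
homogeneous coordinates `(a, b)`. -/
noncomputable def linForm [CommSemiring R] (a b : R) : MvPolynomial (Fin 2) R :=
  C a * X 0 + C b * X 1

lemma eval_linForm [CommSemiring R] (a b : R) (v : Fin 2 → R) :
    eval v (linForm a b) = v 0 * a + v 1 * b := by
  simp only [linForm, map_add, map_mul, eval_C, eval_X, mul_comm]

lemma eval_linForm_cons_neg [CommRing R] (a b a' b' : R) :
    eval ![b', -a'] (linForm a b) = a * b' - a' * b := by
  simp only [eval_linForm, Matrix.cons_val_zero, Matrix.cons_val_one]
  ring

lemma isHomogeneous_linForm [CommSemiring R] (a b : R) : (linForm a b).IsHomogeneous 1 :=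
  (isHomogeneous_C_mul_X a 0).add (isHomogeneous_C_mul_X b 1)

lemma directionalDeriv_linForm [CommSemiring R] (a b : R) (v : Fin 2 → R) :
    directionalDeriv v (linForm a b) = C (eval v (linForm a b)) := by
  rw [eval_linForm]
  simp [directionalDeriv, linForm, mkDerivation_X, mul_comm]

lemma eq_zero_of_eval_linForm_eq_zero [CommRing R] [IsDomain R] {a b a' b' : R} {v : Fin 2 → R}
    (hdet : a * b' - a' * b ≠ 0) (h : eval v (linForm a b) = 0)
    (h' : eval v (linForm a' b') = 0) : v = 0 := by
  rw [eval_linForm, mul_comm (v 0), mul_comm (v 1)] at h h'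
  refine Matrix.eq_zero_of_mulVec_eq_zero (M := !![a, b; a', b']) ?_ ?_
  · rwa [Matrix.det_fin_two_of, mul_comm b]
  · ext i
    fin_cases i <;> simpa [Matrix.mulVec, dotProduct]

end LinearForm

section MajoranaForm

variable {R ι : Type*}

/-- The binary form `K ∏_{j ∈ s} (a_j x + b_j y) ^ d_j`, which encodes the symmetric state whose
Majorana points `(a_j, b_j)` have degeneracies `d_j`. The index set `s` is a parameter so that the
cofactor of one of the linear factors is again such a form. -/
noncomputable def majoranaForm [CommSemiring R] (K : R) (a b : ι → R) (d : ι → ℕ)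
    (s : Finset ι) : MvPolynomial (Fin 2) R :=
  C K * ∏ j ∈ s, linForm (a j) (b j) ^ d j

lemma majoranaForm_eq_pow_mul_erase [CommSemiring R] [DecidableEq ι] (K : R) (a b : ι → R)
    (d : ι → ℕ) {s : Finset ι} {i : ι} (hi : i ∈ s) :
    majoranaForm K a b d s =
      linForm (a i) (b i) ^ d i * majoranaForm K a b d (s.erase i) := by
  rw [majoranaForm, majoranaForm, ← mul_prod_erase s _ hi, mul_left_comm]

lemma isHomogeneous_majoranaForm [CommSemiring R] (K : R) (a b : ι → R) (d : ι → ℕ)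
    (s : Finset ι) : (majoranaForm K a b d s).IsHomogeneous (∑ j ∈ s, d j) := by
  refine (IsHomogeneous.prod s _ d fun j _ => ?_).C_mul K
  simpa only [one_mul] using (isHomogeneous_linForm (a j) (b j)).pow (d j)

variable [CommRing R] [IsDomain R] {K : R} {a b : ι → R} {d : ι → ℕ} {s : Finset ι} {i : ι}
  {v : Fin 2 → R}

lemma eval_majoranaForm_ne_zero (hK : K ≠ 0)
    (hv : ∀ j ∈ s, eval v (linForm (a j) (b j)) ≠ 0) : eval v (majoranaForm K a b d s) ≠ 0 := by
  simp only [majoranaForm, map_mul, eval_C, map_prod, map_pow]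
  exact mul_ne_zero hK (prod_ne_zero_iff.2 fun j hj => pow_ne_zero _ (hv j hj))

theorem emultiplicity_directionalDeriv_majoranaForm_of_eval_eq_zero [CharZero R] (hK : K ≠ 0)
    (hi : i ∈ s) (hdist : ∀ j ∈ s, j ≠ i → a i * b j - a j * b i ≠ 0)
    (hiv : eval v (linForm (a i) (b i)) = 0)
    (hv : ∃ j ∈ s, 0 < d j ∧ eval v (linForm (a j) (b j)) ≠ 0) :
    emultiplicity (linForm (a i) (b i)) (directionalDeriv v (majoranaForm K a b d s)) = d i := by
  classical
  obtain ⟨j₀, hj₀, hdj₀, hj₀v⟩ := hv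
  have hne : j₀ ≠ i := fun h => hj₀v (h ▸ hiv)
  have hv0 : v ≠ 0 := fun h => hj₀v <| by
    simp only [eval_linForm, h, Pi.zero_apply, zero_mul, add_zero]
  have hL : linForm (a i) (b i) ≠ 0 := fun h0 => hdist j₀ hj₀ hne <| by
    rw [← eval_linForm_cons_neg, h0, map_zero]
  have hdeg : ∑ j ∈ s.erase i, d j ≠ 0 := fun h0 =>
    hdj₀.ne' (sum_eq_zero_iff.1 h0 j₀ (mem_erase.2 ⟨hne, hj₀⟩))
  have hcof : eval v (majoranaForm K a b d (s.erase i)) ≠ 0 :=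
    eval_majoranaForm_ne_zero hK fun j hj hjv =>
      hv0 (eq_zero_of_eval_linForm_eq_zero
        (hdist j (mem_of_mem_erase hj) (ne_of_mem_erase hj)) hiv hjv)
  rw [majoranaForm_eq_pow_mul_erase K a b d hi]
  refine emultiplicity_derivation_pow_mul_of_eq_zero _ hL ?_ (not_dvd_of_eval_ne_zero hiv ?_) _
  · rw [directionalDeriv_linForm, hiv, C_0]
  · rw [eval_directionalDeriv_of_isHomogeneous (isHomogeneous_majoranaForm K a b d _)]
    exact mul_ne_zero (Nat.cast_ne_zero.2 hdeg) hcof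

theorem emultiplicity_directionalDeriv_majoranaForm_of_eval_ne_zero (hK : K ≠ 0) (hi : i ∈ s)
    (hdi : (d i : R) ≠ 0) (hdist : ∀ j ∈ s, j ≠ i → a i * b j - a j * b i ≠ 0)
    (hiv : eval v (linForm (a i) (b i)) ≠ 0) :
    emultiplicity (linForm (a i) (b i)) (directionalDeriv v (majoranaForm K a b d s)) =
      (d i - 1 : ℕ) := by
  classical
  have hL : linForm (a i) (b i) ≠ 0 := fun h0 => hiv (by rw [h0, map_zero])
  have hzero : eval ![b i, -a i] (linForm (a i) (b i)) = 0 := by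
    rw [eval_linForm_cons_neg, sub_self]
  have hcof : eval ![b i, -a i] (majoranaForm K a b d (s.erase i)) ≠ 0 :=
    eval_majoranaForm_ne_zero hK fun j hj hj0 =>
      hdist j (mem_of_mem_erase hj) (ne_of_mem_erase hj) <| by
        rw [← neg_sub, ← eval_linForm_cons_neg, hj0, neg_zero]
  obtain ⟨k, hk⟩ : ∃ k, d i = k + 1 :=
    Nat.exists_eq_add_one_of_ne_zero fun h0 => hdi (by rw [h0, Nat.cast_zero])
  rw [majoranaForm_eq_pow_mul_erase K a b d hi, hk, Nat.add_sub_cancel]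
  refine emultiplicity_derivation_pow_succ_mul _ hL k (not_dvd_of_eval_ne_zero hzero ?_)
  rw [hk, Nat.cast_add_one] at hdi
  rw [directionalDeriv_linForm]
  simpa [hcof, hiv] using hdi

end MajoranaForm

lemma conj_mul_self_add_conj_mul_self_ne_zero {𝕜 : Type*} [RCLike 𝕜] {z w : 𝕜}
    (h : ¬(z = 0 ∧ w = 0)) : (starRingEnd 𝕜) z * z + (starRingEnd 𝕜) w * w ≠ 0 := by
  rw [RCLike.conj_mul, RCLike.conj_mul]
  norm_cast
  rwa [add_eq_zero_iff_of_nonneg (sq_nonneg _) (sq_nonneg _), sq_eq_zero_iff, sq_eq_zero_iff,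
    norm_eq_zero, norm_eq_zero]

theorem projected_degeneracy_dichotomy_general {R ι : Type*} [CommRing R] [IsDomain R]
    [CharZero R] [Fintype ι] {K : R} (hK : K ≠ 0) {a b : ι → R} {d : ι → ℕ}
    (hdist : ∀ j j', j ≠ j' → a j * b j' - a j' * b j ≠ 0) (hd : ∀ j, 0 < d j) {v : Fin 2 → R}
    (hv : ∃ j, v 0 * a j + v 1 * b j ≠ 0) {i : ι} {m : ℕ}
    (hm : emultiplicity (linForm (a i) (b i))
      (directionalDeriv v (majoranaForm K a b d univ)) = m) :
    Xor (m = d i ∧ v 0 * a i + v 1 * b i = 0)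
      (m = d i - 1 ∧ v 0 * a i + v 1 * b i ≠ 0) := by
  simp only [← eval_linForm] at hv ⊢
  obtain ⟨j₀, hj₀⟩ := hv
  have hdist_i : ∀ j ∈ univ, j ≠ i → a i * b j - a j * b i ≠ 0 := fun j _ hj => hdist i j hj.symm
  by_cases hiv : eval v (linForm (a i) (b i)) = 0
  · refine Or.inl ⟨⟨?_, hiv⟩, fun h => h.2 hiv⟩
    exact_mod_cast hm.symm.trans <| emultiplicity_directionalDeriv_majoranaForm_of_eval_eq_zero
      hK (mem_univ i) hdist_i hiv ⟨j₀, mem_univ j₀, hd j₀, hj₀⟩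
  · refine Or.inr ⟨⟨?_, hiv⟩, fun h => hiv h.2⟩
    exact_mod_cast hm.symm.trans <| emultiplicity_directionalDeriv_majoranaForm_of_eval_ne_zero
      hK (mem_univ i) (Nat.cast_ne_zero.2 (hd i).ne') hdist_i hiv

/-- for `f = K·∏_j (a_j·x + b_j·y)^{d_j}` of degree `n ≥ 2`,
`g = conj(a₁)·∂f/∂x + conj(b₁)·∂f/∂y`, and `m_i` the largest power of
`(a_i·x + b_i·y)` dividing `g`, exactly one of the following holds for each `i`:
(1) `m_i = d_i` and `⟨η₁|η_i⟩ = 0`; (2) `m_i = d_i − 1` and `⟨η₁|η_i⟩ ≠ 0`. -/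
theorem projected_degeneracy_dichotomy (n l : ℕ) (hn : 2 ≤ n) (hl : 1 ≤ l)
    (K : ℂ) (hK : K ≠ 0) (a b : Fin l → ℂ) (d : Fin l → ℕ)
    (hab : ∀ j, ¬(a j = 0 ∧ b j = 0))
    (hdist : ∀ j j', j ≠ j' → a j * b j' - a j' * b j ≠ 0)
    (hd : ∀ j, 1 ≤ d j) (hsum : ∑ j, d j = n)
    (f g : MvPolynomial (Fin 2) ℂ)
    (hf : f = C K * ∏ j, (C (a j) * X (0 : Fin 2) + C (b j) * X (1 : Fin 2)) ^ (d j))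
    (hg : g = C ((starRingEnd ℂ) (a ⟨0, hl⟩)) * pderiv (0 : Fin 2) f
            + C ((starRingEnd ℂ) (b ⟨0, hl⟩)) * pderiv (1 : Fin 2) f)
    (m : Fin l → ℕ)
    (hm : ∀ i, (C (a i) * X (0 : Fin 2) + C (b i) * X (1 : Fin 2)) ^ (m i) ∣ g ∧
      ¬ ((C (a i) * X (0 : Fin 2) + C (b i) * X (1 : Fin 2)) ^ (m i + 1) ∣ g)) :
    ∀ i : Fin l,
      Xor'
        (m i = d i ∧
          (starRingEnd ℂ) (a ⟨0, hl⟩) * a i + (starRingEnd ℂ) (b ⟨0, hl⟩) * b i = 0)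
        (m i = d i - 1 ∧
          (starRingEnd ℂ) (a ⟨0, hl⟩) * a i + (starRingEnd ℂ) (b ⟨0, hl⟩) * b i ≠ 0) := by
  intro i
  subst hf hg
  have hmult : emultiplicity (linForm (a i) (b i))
      (directionalDeriv ![(starRingEnd ℂ) (a ⟨0, hl⟩), (starRingEnd ℂ) (b ⟨0, hl⟩)]
        (majoranaForm K a b d univ)) = m i := by
    rw [directionalDeriv_eq_sum_pderiv, Fin.sum_univ_two]
    exact emultiplicity_eq_coe.2 (hm i)
  exact projected_degeneracy_dichotomy_general hK hdist hd
    ⟨⟨0, hl⟩, conj_mul_self_add_conj_mul_self_ne_zero (hab ⟨0, hl⟩)⟩ hmult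
end
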